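/- arXiv:2509.11497 — 2 statements merged into one kernel-verified Lean document; each statement's English description precedes it below -/
import Mathlib

section
/- Let $W$ be a finite Coxeter group with a fixed standard Coxeter element $c$, and suppose $x, x'$ are $c$-sortable elements of $W$. Then the left inversion set of their meet in the right weak order satisfies $T_L(x \wedge x') = T_L(x) \cap T_L(x')$. -/
/-- The set of left inversions of `w`. -/
def leftInvSet {B W : Type*} [Group W] {M : CoxeterMatrix B} (cs : CoxeterSystem M W)
    (w : W) : Set W :=
  {t | cs.IsReflection t ∧ cs.length (t * w) < cs.length w}

/-- The right weak order: `u ≤_R v` iff the left inversion set of `u` is contained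
in that of `v`. -/
def RightWeakLE {B W : Type*} [Group W] {M : CoxeterMatrix B} (cs : CoxeterSystem M W)
    (u v : W) : Prop :=
  leftInvSet cs u ⊆ leftInvSet cs v

/-- `w` is `c`-sortable, where the standard Coxeter element `c` is given by the reduced
word `l` (a list of all the simple reflections): `w` has a reduced word that is a
concatenation `c_{K₁} c_{K₂} ⋯` of subwords of `l` corresponding to a weakly decreasing
sequence of subsets `K₁ ⊇ K₂ ⊇ ⋯`. -/
def CSortable {B W : Type*} [DecidableEq B] [Group W] {M : CoxeterMatrix B}
    (cs : CoxeterSystem M W) (l : List B) (w : W) : Prop :=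
  ∃ K : List (Finset B), List.Chain' (fun a b => b ⊆ a) K ∧
    cs.wordProd (K.map (fun k => l.filter (fun b => b ∈ k))).flatten = w ∧
    cs.length w = ((K.map (fun k => l.filter (fun b => b ∈ k))).flatten).length

set_option linter.unusedSectionVars false
set_option linter.unusedSimpArgs false
set_option linter.deprecated false

namespace Sortable

open CoxeterSystem

section geom

variable {B W : Type*} [DecidableEq B] [Fintype B] [Group W] {M : CoxeterMatrix B}

/-- The simple root. -/
def sr (i : B) : B → ℝ := Pi.single i 1

/-- The cosine attached to a pair of generators. -/
noncomputable def cc (M : CoxeterMatrix B) (i j : B) : ℝ := Real.cos (Real.pi / (M i j : ℝ))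

/-- The coroot functional attached to a generator. -/
noncomputable def gf (M : CoxeterMatrix B) (i : B) : (B → ℝ) →ₗ[ℝ] ℝ :=
  ∑ j, (-2 * cc M i j) • LinearMap.proj j

theorem gf_apply (i : B) (β : B → ℝ) : gf M i β = ∑ j, (-2 * cc M i j) * β j := by
  simp [gf, LinearMap.sum_apply]

theorem cc_symm (i j : B) : cc M i j = cc M j i := by
  unfold cc; rw [M.symmetric i j]

theorem cc_self (i : B) : cc M i i = -1 := by
  simp [cc]

theorem gf_sr (i j : B) : gf M i (sr j) = -2 * cc M i j := by
  rw [gf_apply, Finset.sum_eq_single j] <;> simp +contextual [sr, Pi.single_apply]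

theorem gf_sr_self (i : B) : gf M i (sr i) = 2 := by
  rw [gf_sr, cc_self]; norm_num

/-- The simple reflection. -/
noncomputable def sg (M : CoxeterMatrix B) (i : B) : Module.End ℝ (B → ℝ) :=
  LinearMap.id - (gf M i).smulRight (sr i)

theorem sg_apply (i : B) (β : B → ℝ) : sg M i β = β - gf M i β • sr i := by
  simp [sg]

theorem sg_sg (i : B) (β : B → ℝ) : sg M i (sg M i β) = β := by
  simp only [sg_apply, map_sub, map_smul, gf_sr_self]
  module

theorem sg_sr_self (i : B) : sg M i (sr i) = - sr i := by
  rw [sg_apply, gf_sr_self]; module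

theorem sin_pos_of (n : ℕ) (h : 2 ≤ n) : 0 < Real.sin (Real.pi / (n : ℝ)) := by
  have hn : (2 : ℝ) ≤ n := by exact_mod_cast h
  apply Real.sin_pos_of_pos_of_lt_pi
  · positivity
  · rw [div_lt_iff₀ (by linarith)]
    nlinarith [Real.pi_pos]

theorem cc_nonneg {i j : B} (h : i ≠ j) : 0 ≤ cc M i j := by
  unfold cc
  have h1 := M.off_diagonal i j h
  rcases Nat.eq_zero_or_pos (M i j) with h0 | h0
  · simp [h0]
  · have hn : (2 : ℝ) ≤ (M i j : ℕ) := by exact_mod_cast (by omega : 2 ≤ M i j)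
    apply Real.cos_nonneg_of_neg_pi_div_two_le_of_le
    · have : 0 ≤ Real.pi / (M i j : ℝ) := by positivity
      linarith [Real.pi_pos]
    · rw [div_le_div_iff₀ (by linarith) (by norm_num)]
      nlinarith [Real.pi_pos]

theorem sin_rec (φ θ : ℝ) :
    2 * Real.cos θ * Real.sin (φ + θ) - Real.sin φ = Real.sin (φ + 2 * θ) := by
  rw [Real.sin_add, Real.sin_add, Real.sin_two_mul, Real.cos_two_mul]
  nlinarith [Real.sin_sq_add_cos_sq θ]

theorem rot_step (i j : B) (φ : ℝ) :
    (sg M i * sg M j) (Real.sin (φ + Real.pi / (M i j : ℝ)) • sr i + Real.sin φ • sr j) =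
    Real.sin (φ + 2 * (Real.pi / (M i j : ℝ)) + Real.pi / (M i j : ℝ)) • sr i +
      Real.sin (φ + 2 * (Real.pi / (M i j : ℝ))) • sr j := by
  have h1 := sin_rec φ (Real.pi / (M i j : ℝ))
  have h2 := sin_rec (φ + Real.pi / (M i j : ℝ)) (Real.pi / (M i j : ℝ))
  have e1 : φ + Real.pi / (M i j : ℝ) + Real.pi / (M i j : ℝ) =
    φ + 2 * (Real.pi / (M i j : ℝ)) := by ring
  have e2 : φ + Real.pi / (M i j : ℝ) + 2 * (Real.pi / (M i j : ℝ)) =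
    φ + 2 * (Real.pi / (M i j : ℝ)) + Real.pi / (M i j : ℝ) := by ring
  rw [e1, e2] at h2
  simp only [Module.End.mul_apply, sg_apply, map_add, map_sub, map_smul, gf_sr, cc_self,
    cc_symm j i, smul_eq_mul]
  have hc : cc M i j = Real.cos (Real.pi / (M i j : ℝ)) := rfl
  rw [← hc] at h1 h2
  rw [← h2, ← h1]
  module

theorem rot_pow (i j : B) (φ : ℝ) (k : ℕ) :
    ((sg M i * sg M j) ^ k) (Real.sin (φ + Real.pi / (M i j : ℝ)) • sr i + Real.sin φ • sr j) =
    Real.sin (φ + k * (2 * (Real.pi / (M i j : ℝ))) + Real.pi / (M i j : ℝ)) • sr i +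
      Real.sin (φ + k * (2 * (Real.pi / (M i j : ℝ)))) • sr j := by
  induction k with
  | zero => simp
  | succ k ih =>
    rw [pow_succ', Module.End.mul_apply, ih, rot_step]
    congr 3 <;> (push_cast; ring_nf)

theorem rot_fix (i j : B) (h : 2 ≤ M i j) (φ : ℝ) :
    ((sg M i * sg M j) ^ (M i j)) (Real.sin (φ + Real.pi / (M i j : ℝ)) • sr i
      + Real.sin φ • sr j) =
    Real.sin (φ + Real.pi / (M i j : ℝ)) • sr i + Real.sin φ • sr j := by
  have h0 : ((M i j : ℕ) : ℝ) ≠ 0 := by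
    have : (2 : ℝ) ≤ (M i j : ℕ) := by exact_mod_cast h
    linarith
  rw [rot_pow]
  have e : (M i j : ℝ) * (2 * (Real.pi / (M i j : ℝ))) = 2 * Real.pi := by
    field_simp
  rw [e, add_right_comm, Real.sin_add_two_pi, Real.sin_add_two_pi]

theorem sg_liftable : M.IsLiftable (sg M) := by
  intro i j
  by_cases hij : i = j
  · subst hij
    rw [M.diagonal, pow_one]
    refine LinearMap.ext fun β => ?_
    simp [Module.End.mul_apply, sg_sg]
  have h1 := M.off_diagonal i j hij
  rcases Nat.eq_zero_or_pos (M i j) with h0 | h0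
  · rw [h0, pow_zero]
  have h2 : 2 ≤ M i j := by omega
  have hs := sin_pos_of _ h2
  have hi : ((sg M i * sg M j) ^ (M i j)) (sr i) = sr i := by
    have := rot_fix i j h2 0
    simp only [zero_add, Real.sin_zero, zero_smul, add_zero, map_smul] at this
    exact smul_right_injective _ hs.ne' this
  have hj : ((sg M i * sg M j) ^ (M i j)) (sr j) = sr j := by
    have := rot_fix i j h2 (-(Real.pi / (M i j : ℝ)))
    simp only [neg_add_cancel, Real.sin_zero, zero_smul, zero_add, map_smul, Real.sin_neg] at this
    exact smul_right_injective _ (neg_ne_zero.2 hs.ne') this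
  have hu : ∀ u, gf M i u = 0 → gf M j u = 0 → ((sg M i * sg M j) ^ (M i j)) u = u := by
    intro u h1 h2
    have : (sg M i * sg M j) u = u := by simp [Module.End.mul_apply, sg_apply, h1, h2]
    generalize M i j = k
    induction k with
    | zero => simp
    | succ k ih => rw [pow_succ, Module.End.mul_apply, this, ih]
  refine LinearMap.ext fun z => ?_
  set c := cc M i j with hc
  have hd : 1 - c ^ 2 ≠ 0 := by
    have := Real.sin_sq_add_cos_sq (Real.pi / (M i j : ℝ))
    have hc' : c = Real.cos (Real.pi / (M i j : ℝ)) := rfl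
    rw [hc']
    nlinarith
  obtain ⟨a, b, ha, hb⟩ : ∃ a b : ℝ, 2 * a - 2 * c * b = gf M i z ∧
      -2 * c * a + 2 * b = gf M j z := by
    refine ⟨(gf M i z + c * gf M j z) / (2 * (1 - c ^ 2)),
      (gf M j z + c * gf M i z) / (2 * (1 - c ^ 2)), ?_, ?_⟩ <;> field_simp <;> ring
  have hz : z = (z - a • sr i - b • sr j) + a • sr i + b • sr j := by module
  rw [hz]
  simp only [map_add, map_smul, hi, hj, Module.End.one_apply]
  rw [hu]
  · simp only [map_sub, map_smul, gf_sr, cc_self, smul_eq_mul, ← hc, ← ha]; ring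
  · simp only [map_sub, map_smul, gf_sr, cc_self, smul_eq_mul, cc_symm j i, ← hc, ← hb]; ring

/-- The geometric representation. -/
noncomputable def rho (cs : CoxeterSystem M W) : W →* Module.End ℝ (B → ℝ) :=
  cs.lift ⟨sg M, sg_liftable⟩

theorem rho_simple (cs : CoxeterSystem M W) (i : B) : rho cs (cs.simple i) = sg M i :=
  cs.lift_apply_simple _ i

theorem rho_inv_apply (cs : CoxeterSystem M W) (w : W) (β : B → ℝ) :
    rho cs w⁻¹ (rho cs w β) = β := by
  rw [← Module.End.mul_apply, ← map_mul]; simp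

theorem rho_apply_inv (cs : CoxeterSystem M W) (w : W) (β : B → ℝ) :
    rho cs w (rho cs w⁻¹ β) = β := by
  rw [← Module.End.mul_apply, ← map_mul]; simp

/-- Chebyshev-like coefficients. -/
noncomputable def uc (c : ℝ) : ℕ → ℝ
  | 0 => 0
  | 1 => 1
  | (k + 2) => 2 * c * uc c (k + 1) - uc c k

theorem uc_sin (θ : ℝ) (k : ℕ) : uc (Real.cos θ) k * Real.sin θ = Real.sin (k * θ) := by
  induction k using Nat.twoStepInduction with
  | zero => simp [uc]
  | one => simp [uc]
  | more k h1 h2 =>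
    have := sin_rec (k * θ) θ
    rw [uc]
    push_cast at *
    rw [show (k : ℝ) * θ + 2 * θ = (k + 2) * θ by ring,
      show (k : ℝ) * θ + θ = (k + 1) * θ by ring] at this
    rw [← this, ← h1, ← h2]; ring

theorem uc_one (k : ℕ) : uc 1 k = k := by
  induction k using Nat.twoStepInduction with
  | zero => simp [uc]
  | one => simp [uc]
  | more k h1 h2 => rw [uc, h1, h2]; push_cast; ring

theorem uc_nonneg {i j : B} (hij : i ≠ j) (k : ℕ) (hk : M i j = 0 ∨ k ≤ M i j) :
    0 ≤ uc (cc M i j) k := by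
  have h1 := M.off_diagonal i j hij
  rcases Nat.eq_zero_or_pos (M i j) with h0 | h0
  · have : cc M i j = 1 := by simp [cc, h0]
    rw [this, uc_one]; positivity
  · have hs := sin_pos_of (M i j) (by omega)
    have := uc_sin (Real.pi / (M i j : ℝ)) k
    have h3 : 0 ≤ Real.sin (k * (Real.pi / (M i j : ℝ))) := by
      apply Real.sin_nonneg_of_nonneg_of_le_pi
      · positivity
      · have hk' : (k : ℝ) ≤ (M i j : ℕ) := by exact_mod_cast (by omega : k ≤ M i j)
        have : (0 : ℝ) < (M i j : ℕ) := by exact_mod_cast h0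
        rw [mul_div_assoc', div_le_iff₀ this]
        nlinarith [Real.pi_pos]
    rw [← this] at h3
    exact nonneg_of_mul_nonneg_left h3 hs

theorem rho_alt (cs : CoxeterSystem M W) (s t : B) (k : ℕ) :
    rho cs (cs.wordProd (alternatingWord s t k)) (sr s) =
      if Even k then uc (cc M s t) (k + 1) • sr s + uc (cc M s t) k • sr t
      else uc (cc M s t) k • sr s + uc (cc M s t) (k + 1) • sr t := by
  induction k with
  | zero => simp [alternatingWord, uc]
  | succ k ih =>
    rw [alternatingWord_succ', cs.wordProd_cons, map_mul, Module.End.mul_apply, ih, rho_simple]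
    by_cases hk : Even k
    · have hk' : ¬ Even (k + 1) := by simpa [Nat.even_add_one] using hk
      simp only [if_pos hk, if_neg hk', sg_apply, map_add, map_smul, gf_sr, cc_self, uc,
        cc_symm t s, smul_eq_mul]
      module
    · have hk' : Even (k + 1) := by simpa [Nat.even_add_one] using hk
      simp only [if_neg hk, if_pos hk', sg_apply, map_add, map_smul, gf_sr, cc_self, uc,
        smul_eq_mul]
      module

theorem rho_pos (cs : CoxeterSystem M W) : ∀ (n : ℕ) (w : W) (s : B), cs.length w = n →
    cs.length (w * cs.simple s) = cs.length w + 1 → 0 ≤ rho cs w (sr s) := by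
  intro n
  induction n using Nat.strong_induction_on with
  | _ n IH =>
  intro w s hn hs
  by_cases hw : w = 1
  · subst hw
    simp only [map_one, Module.End.one_apply]
    intro i
    by_cases h : i = s
    · subst h; simp [sr]
    · simp [sr, h]
  obtain ⟨t, ht⟩ := cs.exists_rightDescent_of_ne_one hw
  have hst : s ≠ t := by
    rintro rfl
    unfold IsRightDescent at ht; omega
  let Q : ℕ → Prop := fun k => ∃ v, w = v * cs.wordProd (alternatingWord s t k) ∧
    cs.length v + k = cs.length w
  have hQ1 : Q 1 := ⟨w * cs.simple t, by simp [alternatingWord],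
    by rcases cs.length_mul_simple w t with h | h <;> unfold IsRightDescent at ht <;> omega⟩
  have hQb : ∀ k, Q k → k ≤ cs.length w := by rintro k ⟨v, -, h⟩; omega
  obtain ⟨k, hk1, hk, hmax⟩ : ∃ k, 1 ≤ k ∧ Q k ∧ ¬ Q (k + 1) := by
    by_contra hcon
    push Not at hcon
    have : ∀ k, Q (k + 1) := by
      intro k
      induction k with
      | zero => exact hQ1
      | succ k ih => exact hcon (k + 1) (by omega) ih
    have := hQb _ (this (cs.length w)); omega
  obtain ⟨v, hv, hl⟩ := hk
  have hr1 : cs.length (v * cs.simple (if Even k then t else s)) = cs.length v + 1 := by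
    rcases cs.length_mul_simple v (if Even k then t else s) with h | h
    · exact h
    · exfalso; apply hmax
      refine ⟨v * cs.simple (if Even k then t else s), ?_, by omega⟩
      rw [alternatingWord_succ', cs.wordProd_cons, hv]
      simp only [← mul_assoc, cs.simple_mul_simple_cancel_right]
  have hr2 : cs.length (v * cs.simple (if Even k then s else t)) = cs.length v + 1 := by
    obtain ⟨k, rfl⟩ : ∃ k', k = k' + 1 := ⟨k - 1, by omega⟩
    have e : (if Even (k + 1) then s else t) = (if Even k then t else s) := by
      by_cases h : Even k <;> simp [Nat.even_add_one, h]
    rw [e]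
    rw [alternatingWord_succ', cs.wordProd_cons, ← mul_assoc] at hv
    have h1 := cs.length_mul_le (v * cs.simple (if Even k then t else s))
      (cs.wordProd (alternatingWord s t k))
    rw [← hv] at h1
    have h2 := cs.length_wordProd_le (alternatingWord s t k)
    rw [length_alternatingWord] at h2
    rcases cs.length_mul_simple v (if Even k then t else s) with h | h <;> omega
  have hvs : 0 ≤ rho cs v (sr s) := by
    apply IH (cs.length v) (by omega) v s rfl
    by_cases h : Even k
    · simpa [h] using hr2
    · simpa [h] using hr1
  have hvt : 0 ≤ rho cs v (sr t) := by
    apply IH (cs.length v) (by omega) v t rfl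
    by_cases h : Even k
    · simpa [h] using hr1
    · simpa [h] using hr2
  have hkm : M s t = 0 ∨ k + 1 ≤ M s t := by
    by_contra! hcon
    obtain ⟨h0, hlt⟩ := hcon
    have h1 := cs.not_isReduced_alternatingWord t s (m := k + 1)
      (by rwa [M.symmetric]) (by rw [M.symmetric]; omega)
    have h2 := cs.length_wordProd_le (alternatingWord t s (k + 1))
    unfold CoxeterSystem.IsReduced at h1
    rw [length_alternatingWord] at h1 h2
    have h3 : w * cs.simple s = v * cs.wordProd (alternatingWord t s (k + 1)) := by
      rw [alternatingWord_succ, cs.wordProd_concat, hv, mul_assoc]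
    have h4 := cs.length_mul_le v (cs.wordProd (alternatingWord t s (k + 1)))
    rw [← h3] at h4
    omega
  have hu1 := uc_nonneg hst (k + 1) hkm
  have hu0 := uc_nonneg (M := M) hst k (by omega)
  rw [hv, map_mul, Module.End.mul_apply, rho_alt]
  split_ifs
  · simp only [map_add, map_smul]
    exact add_nonneg (smul_nonneg hu1 hvs) (smul_nonneg hu0 hvt)
  · simp only [map_add, map_smul]
    exact add_nonneg (smul_nonneg hu0 hvs) (smul_nonneg hu1 hvt)

/-- The invariant bilinear form. -/
noncomputable def bb (M : CoxeterMatrix B) : (B → ℝ) →ₗ[ℝ] (B → ℝ) →ₗ[ℝ] ℝ :=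
  ∑ i, (LinearMap.proj i : (B → ℝ) →ₗ[ℝ] ℝ).smulRight (gf M i)

theorem bb_apply (β γ : B → ℝ) : bb M β γ = ∑ i, β i * gf M i γ := by
  simp [bb, LinearMap.sum_apply]

theorem bb_symm (β γ : B → ℝ) : bb M β γ = bb M γ β := by
  simp only [bb_apply, gf_apply, Finset.mul_sum]
  rw [Finset.sum_comm]
  refine Finset.sum_congr rfl fun i _ => Finset.sum_congr rfl fun j _ => ?_
  rw [cc_symm]; ring

theorem bb_sr_left (i : B) (γ : B → ℝ) : bb M (sr i) γ = gf M i γ := by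
  rw [bb_apply, Finset.sum_eq_single i] <;> simp +contextual [sr]

theorem bb_sr_right (i : B) (γ : B → ℝ) : bb M γ (sr i) = gf M i γ := by
  rw [bb_symm, bb_sr_left]

theorem bb_sg (i : B) (β γ : B → ℝ) : bb M (sg M i β) (sg M i γ) = bb M β γ := by
  simp only [sg_apply, map_sub, map_smul, LinearMap.sub_apply, LinearMap.smul_apply,
    bb_sr_left, bb_sr_right, gf_sr_self, smul_eq_mul]
  ring

theorem bb_rho (cs : CoxeterSystem M W) (w : W) (β γ : B → ℝ) :
    bb M (rho cs w β) (rho cs w γ) = bb M β γ := by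
  induction w using cs.simple_induction_left with
  | one => simp
  | mul_simple_left w i ih =>
    rw [map_mul, Module.End.mul_apply, Module.End.mul_apply, rho_simple, bb_sg, ih]

/-- Roots. -/
def IsRt (cs : CoxeterSystem M W) (β : B → ℝ) : Prop := ∃ w s, β = rho cs w (sr s)

theorem isRt_rho (cs : CoxeterSystem M W) {β : B → ℝ} (h : IsRt cs β) (w : W) :
    IsRt cs (rho cs w β) := by
  obtain ⟨v, s, rfl⟩ := h
  exact ⟨w * v, s, by rw [map_mul, Module.End.mul_apply]⟩

theorem isRt_sg (cs : CoxeterSystem M W) {β : B → ℝ} (h : IsRt cs β) (s : B) :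
    IsRt cs (sg M s β) := by
  rw [← rho_simple cs]; exact isRt_rho cs h _

theorem isRt_sr (cs : CoxeterSystem M W) (s : B) : IsRt cs (sr s) := ⟨1, s, by simp⟩

theorem bb_self (cs : CoxeterSystem M W) {β : B → ℝ} (h : IsRt cs β) : bb M β β = 2 := by
  obtain ⟨v, s, rfl⟩ := h
  rw [bb_rho, bb_sr_left, gf_sr_self]

theorem sr_nonneg (s : B) : (0 : B → ℝ) ≤ sr s := by
  intro i
  by_cases h : i = s
  · subst h; simp [sr]
  · simp [sr, h]

theorem rt_ne_zero (cs : CoxeterSystem M W) {β : B → ℝ} (h : IsRt cs β) : β ≠ 0 := by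
  rintro rfl
  have := bb_self cs h
  simp at this

theorem rt_pos_or_neg (cs : CoxeterSystem M W) {β : B → ℝ} (h : IsRt cs β) : 0 ≤ β ∨ β ≤ 0 := by
  obtain ⟨w, s, rfl⟩ := h
  rcases cs.length_mul_simple w s with h | h
  · exact Or.inl (rho_pos cs _ w s rfl h)
  · right
    have := rho_pos cs _ (w * cs.simple s) s rfl (by
      rw [cs.simple_mul_simple_cancel_right]; omega)
    rw [map_mul, Module.End.mul_apply, rho_simple, sg_sr_self, map_neg] at this
    exact neg_nonneg.1 this

theorem rt_not_both (cs : CoxeterSystem M W) {β : B → ℝ} (h : IsRt cs β) (h1 : 0 ≤ β)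
    (h2 : β ≤ 0) : False := rt_ne_zero cs h (le_antisymm h2 h1)

theorem sg_ne (s j : B) (h : j ≠ s) (β : B → ℝ) : sg M s β j = β j := by
  simp [sg_apply, sr, h]

theorem sg_same (s : B) (β : B → ℝ) : sg M s β s = β s - gf M s β := by
  simp [sg_apply, sr]

theorem rt_eq_sr (cs : CoxeterSystem M W) {β : B → ℝ} (h : IsRt cs β) (h0 : 0 ≤ β) (s : B)
    (hz : ∀ j, j ≠ s → β j = 0) : β = sr s := by
  have e : β = β s • sr s := by
    ext j
    by_cases hj : j = s
    · subst hj; simp [sr]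
    · simp [sr, hj, hz j hj]
  have h2 := bb_self cs h
  rw [e] at h2
  simp only [map_smul, LinearMap.smul_apply, bb_sr_left, gf_sr_self, smul_eq_mul] at h2
  have h3 : 0 ≤ β s := h0 s
  have h4 : β s = 1 := by nlinarith
  rw [e, h4, one_smul]

theorem sg_pos (cs : CoxeterSystem M W) {β : B → ℝ} (h : IsRt cs β) (h0 : 0 ≤ β) (s : B)
    (hs : β ≠ sr s) : 0 ≤ sg M s β := by
  rcases rt_pos_or_neg cs (isRt_sg cs h s) with h1 | h1
  · exact h1
  · exfalso; apply hs
    apply rt_eq_sr cs h h0 s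
    intro j hj
    have := h1 j
    rw [sg_ne s j hj] at this
    exact le_antisymm this (h0 j)

theorem rho_faithful (cs : CoxeterSystem M W) (g : W) (h : rho cs g = 1) : g = 1 := by
  by_contra hg
  obtain ⟨s, hs⟩ := cs.exists_rightDescent_of_ne_one hg
  have := rho_pos cs _ (g * cs.simple s) s rfl (by
      rw [cs.simple_mul_simple_cancel_right]
      rcases cs.length_mul_simple g s with h | h <;> unfold IsRightDescent at hs <;> omega)
  rw [map_mul, Module.End.mul_apply, rho_simple, sg_sr_self, map_neg, h] at this
  have := this s
  simp [sr] at this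
  linarith

theorem rho_refl (cs : CoxeterSystem M W) (w : W) (s : B) (γ : B → ℝ) :
    rho cs (w * cs.simple s * w⁻¹) γ =
      γ - bb M (rho cs w (sr s)) γ • rho cs w (sr s) := by
  rw [map_mul, map_mul, Module.End.mul_apply, Module.End.mul_apply, rho_simple, sg_apply,
    map_sub, map_smul, rho_apply_inv, ← bb_sr_left, ← bb_rho cs w, rho_apply_inv]

theorem refl_eq (cs : CoxeterSystem M W) (w v : W) (s r : B)
    (h : rho cs w (sr s) = rho cs v (sr r)) :
    w * cs.simple s * w⁻¹ = v * cs.simple r * v⁻¹ := by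
  have : (w * cs.simple s * w⁻¹) * (v * cs.simple r * v⁻¹)⁻¹ = 1 := by
    apply rho_faithful cs
    have e : rho cs (w * cs.simple s * w⁻¹) = rho cs (v * cs.simple r * v⁻¹) := by
      refine LinearMap.ext fun γ => ?_
      rw [rho_refl, rho_refl, h]
    rw [map_mul, e, ← map_mul, mul_inv_cancel, map_one]
  exact mul_inv_eq_one.1 this

/-- Inversion set as a set of roots. -/
def Inv (cs : CoxeterSystem M W) (x : W) : Set (B → ℝ) :=
  {β | IsRt cs β ∧ 0 ≤ β ∧ rho cs x⁻¹ β ≤ 0}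

theorem length_lt_of_neg (cs : CoxeterSystem M W) : ∀ (n : ℕ) (x : W), cs.length x = n →
    ∀ (w : W) (s : B), 0 ≤ rho cs w (sr s) → rho cs x⁻¹ (rho cs w (sr s)) ≤ 0 →
    cs.length (w * cs.simple s * w⁻¹ * x) < cs.length x := by
  intro n
  induction n with
  | zero =>
    intro x hx w s h1 h2
    rw [cs.length_eq_zero_iff] at hx
    subst hx
    simp only [inv_one, map_one, Module.End.one_apply] at h2
    exact (rt_not_both cs ⟨w, s, rfl⟩ h1 h2).elim
  | succ n ih =>
    intro x hx w s h1 h2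
    have hx1 : x ≠ 1 := by rintro rfl; simp at hx
    obtain ⟨r, hr⟩ := cs.exists_leftDescent_of_ne_one hx1
    by_cases hb : rho cs w (sr s) = sr r
    · have : w * cs.simple s * w⁻¹ = cs.simple r := by
        have := refl_eq cs w 1 s r (by simpa using hb)
        simpa using this
      rw [this]; exact hr
    · have hl : cs.length (cs.simple r * x) + 1 = cs.length x := by
        rcases cs.length_simple_mul x r with h | h <;> unfold IsLeftDescent at hr <;> omega
      have h3 := sg_pos cs ⟨w, s, rfl⟩ h1 r hb
      have h4 := ih (cs.simple r * x) (by omega) (cs.simple r * w) s (by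
        rwa [map_mul, Module.End.mul_apply, rho_simple]) (by
        rw [← Module.End.mul_apply, ← map_mul]
        rw [← Module.End.mul_apply, ← map_mul] at h2
        simpa [mul_assoc] using h2)
      have h5 := cs.length_mul_le (cs.simple r)
        (cs.simple r * w * cs.simple s * (cs.simple r * w)⁻¹ * (cs.simple r * x))
      have e : cs.simple r * (cs.simple r * w * cs.simple s * (cs.simple r * w)⁻¹ *
          (cs.simple r * x)) = w * cs.simple s * w⁻¹ * x := by
        simp [mul_assoc]
      rw [e, cs.length_simple] at h5
      omega

theorem length_lt_iff (cs : CoxeterSystem M W) (x w : W) (s : B) (h : 0 ≤ rho cs w (sr s)) :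
    cs.length (w * cs.simple s * w⁻¹ * x) < cs.length x ↔ rho cs w (sr s) ∈ Inv cs x := by
  constructor
  · intro hlt
    refine ⟨⟨w, s, rfl⟩, h, ?_⟩
    by_contra hcon
    have hpos : 0 ≤ rho cs x⁻¹ (rho cs w (sr s)) :=
      (rt_pos_or_neg cs (isRt_rho cs ⟨w, s, rfl⟩ _)).resolve_right hcon
    have := length_lt_of_neg cs _ (w * cs.simple s * w⁻¹ * x) rfl w s h (by
      have e : (w * cs.simple s * w⁻¹ * x)⁻¹ = x⁻¹ * (w * cs.simple s * w⁻¹) := by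
        simp [mul_assoc]
      rw [e, map_mul, Module.End.mul_apply, rho_refl, bb_self cs ⟨w, s, rfl⟩]
      have e2 : rho cs w (sr s) - (2 : ℝ) • rho cs w (sr s) = - rho cs w (sr s) := by module
      rw [e2, map_neg]
      exact neg_nonpos.2 hpos)
    have e3 : w * cs.simple s * w⁻¹ * (w * cs.simple s * w⁻¹ * x) = x := by
      simp [mul_assoc]
    rw [e3] at this
    omega
  · rintro ⟨-, -, h3⟩
    exact length_lt_of_neg cs _ x rfl w s h h3

theorem refl_pos (cs : CoxeterSystem M W) {t : W} (ht : cs.IsReflection t) :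
    ∃ w s, t = w * cs.simple s * w⁻¹ ∧ 0 ≤ rho cs w (sr s) := by
  obtain ⟨w, s, rfl⟩ := ht
  rcases rt_pos_or_neg cs ⟨w, s, rfl⟩ with h | h
  · exact ⟨w, s, rfl, h⟩
  · refine ⟨w * cs.simple s, s, by simp [mul_assoc], ?_⟩
    rw [map_mul, Module.End.mul_apply, rho_simple, sg_sr_self, map_neg]
    exact neg_nonneg.2 h

theorem leftInv_of_Inv (cs : CoxeterSystem M W) {x x' z : W}
    (h : Inv cs z = Inv cs x ∩ Inv cs x') :
    leftInvSet cs z = leftInvSet cs x ∩ leftInvSet cs x' := by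
  ext t
  constructor
  · rintro ⟨ht, hl⟩
    obtain ⟨w, s, rfl, hp⟩ := refl_pos cs ht
    rw [length_lt_iff cs _ _ _ hp, h] at hl
    exact ⟨⟨ht, (length_lt_iff cs _ _ _ hp).2 hl.1⟩, ⟨ht, (length_lt_iff cs _ _ _ hp).2 hl.2⟩⟩
  · rintro ⟨⟨ht, hl⟩, ⟨-, hl'⟩⟩
    refine ⟨ht, ?_⟩
    obtain ⟨w, s, rfl, hp⟩ := refl_pos cs ht
    rw [length_lt_iff cs _ _ _ hp] at hl hl' ⊢
    rw [h]; exact ⟨hl, hl'⟩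

/-- Biclosed sets of positive roots. -/
structure Bicl (cs : CoxeterSystem M W) (A : Set (B → ℝ)) : Prop where
  pos : ∀ β ∈ A, IsRt cs β ∧ 0 ≤ β
  cl : ∀ β γ (a b : ℝ), β ∈ A → γ ∈ A → 0 < a → 0 < b → IsRt cs (a • β + b • γ) →
    a • β + b • γ ∈ A
  cocl : ∀ β γ (a b : ℝ), IsRt cs β → 0 ≤ β → IsRt cs γ → 0 ≤ γ → 0 < a → 0 < b →
    a • β + b • γ ∈ A → β ∈ A ∨ γ ∈ A

theorem bicl_simple (cs : CoxeterSystem M W) {A : Set (B → ℝ)} (hA : Bicl cs A)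
    (hf : A.Finite) (hne : A.Nonempty) : ∃ s, sr s ∈ A := by
  obtain ⟨δ, hδ, hmin⟩ := Set.exists_min_image A (fun β => ∑ i, β i) hf hne
  obtain ⟨hr, h0⟩ := hA.pos δ hδ
  have hb := bb_self cs hr
  obtain ⟨s, hs⟩ : ∃ s, 0 < gf M s δ := by
    by_contra! hcon
    rw [bb_apply] at hb
    have : ∑ i, δ i * gf M i δ ≤ 0 := Finset.sum_nonpos fun i _ =>
      mul_nonpos_of_nonneg_of_nonpos (h0 i) (hcon i)
    linarith
  refine ⟨s, ?_⟩
  by_cases hds : δ = sr s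
  · rwa [← hds]
  have h1 := sg_pos cs hr h0 s hds
  have e : (1 : ℝ) • sg M s δ + gf M s δ • sr s = δ := by rw [sg_apply]; module
  rcases hA.cocl (sg M s δ) (sr s) 1 (gf M s δ) (isRt_sg cs hr s) h1 (isRt_sr cs s)
    (sr_nonneg s) one_pos hs (by rwa [e]) with h | h
  · exfalso
    have := hmin _ h
    simp only [sg_apply, sr, Pi.sub_apply, Pi.smul_apply, smul_eq_mul,
      Finset.sum_sub_distrib, ← Finset.mul_sum] at this
    simp at this
    linarith
  · exact h

theorem sr_not_mem (cs : CoxeterSystem M W) {x : W} {s : B} (h : sr s ∉ Inv cs x) :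
    0 ≤ rho cs x⁻¹ (sr s) := by
  rcases rt_pos_or_neg cs (isRt_rho cs (isRt_sr cs s) x⁻¹) with h1 | h1
  · exact h1
  · exact (h ⟨isRt_sr cs s, sr_nonneg s, h1⟩).elim

theorem rho_simple_mul_inv (cs : CoxeterSystem M W) (x : W) (s : B) (β : B → ℝ) :
    rho cs (cs.simple s * x)⁻¹ β = rho cs x⁻¹ (sg M s β) := by
  rw [← rho_simple cs, ← Module.End.mul_apply, ← map_mul]; simp

theorem pos_comb (cs : CoxeterSystem M W) {β γ : B → ℝ} {a b : ℝ}
    (hβ : IsRt cs β) (hβ0 : 0 ≤ β) (hγ : IsRt cs γ) (hγ0 : 0 ≤ γ) (ha : 0 < a) (hb : 0 < b)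
    (s : B) (h : a • β + b • γ = sr s) : β = sr s ∧ γ = sr s := by
  have : ∀ j, j ≠ s → β j = 0 ∧ γ j = 0 := by
    intro j hj
    have h1 := congrFun h j
    simp [sr, hj] at h1
    have h2 : 0 ≤ β j := hβ0 j
    have h3 : 0 ≤ γ j := hγ0 j
    constructor <;> nlinarith [mul_nonneg ha.le h2, mul_nonneg hb.le h3]
  exact ⟨rt_eq_sr cs hβ hβ0 s fun j hj => (this j hj).1,
    rt_eq_sr cs hγ hγ0 s fun j hj => (this j hj).2⟩

theorem bicl_inv (cs : CoxeterSystem M W) : ∀ (n : ℕ) (A : Set (B → ℝ)), Bicl cs A →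
    A.Finite → A.ncard = n → ∃ z, Inv cs z = A := by
  intro n
  induction n with
  | zero =>
    intro A hA hf hc
    rw [Set.ncard_eq_zero hf] at hc
    subst hc
    refine ⟨1, ?_⟩
    ext β
    simp only [Set.mem_empty_iff_false, iff_false]
    rintro ⟨h1, h2, h3⟩
    simp only [inv_one, map_one, Module.End.one_apply] at h3
    exact rt_not_both cs h1 h2 h3
  | succ n ih =>
    intro A hA hf hc
    obtain ⟨s, hs⟩ := bicl_simple cs hA hf (Set.nonempty_of_ncard_ne_zero (by omega))
    let A' : Set (B → ℝ) := {β | sg M s β ∈ A ∧ β ≠ - sr s}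
    have hA' : A' = sg M s '' (A \ {sr s}) := by
      ext β
      constructor
      · rintro ⟨h1, h2⟩
        refine ⟨sg M s β, ⟨h1, fun h => h2 ?_⟩, sg_sg s β⟩
        rw [← sg_sg (M := M) s β, show sg M s β = sr s from h, sg_sr_self]
      · rintro ⟨γ, ⟨h1, h2⟩, rfl⟩
        refine ⟨by rwa [sg_sg], fun h => h2 ?_⟩
        show γ = sr s
        rw [← sg_sg (M := M) s γ, h, map_neg, sg_sr_self, neg_neg]
    have hinj : Function.Injective (sg M s) := fun a b h => by
      rw [← sg_sg (M := M) s a, h, sg_sg]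
    have hcard : A'.ncard = n := by
      rw [hA', Set.ncard_image_of_injective _ hinj, Set.ncard_sdiff_singleton_of_mem hs]
      omega
    have hf' : A'.Finite := by rw [hA']; exact (hf.subset Set.diff_subset).image _
    have hpos' : ∀ β ∈ A', IsRt cs β ∧ 0 ≤ β := by
      rw [hA']
      rintro _ ⟨γ, ⟨h1, h2⟩, rfl⟩
      obtain ⟨h3, h4⟩ := hA.pos γ h1
      exact ⟨isRt_sg cs h3 s, sg_pos cs h3 h4 s h2⟩
    have hsn : sr s ∉ A' := by
      rintro ⟨h1, -⟩
      rw [sg_sr_self] at h1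
      have h2 := (hA.pos _ h1).2 s
      simp [sr] at h2
      linarith
    have hneg : ∀ β : B → ℝ, 0 ≤ β → β ≠ - sr s := by
      rintro _ h rfl
      have h2 := h s
      simp [sr] at h2
      linarith
    have hB : Bicl cs A' := by
      refine ⟨hpos', ?_, ?_⟩
      · intro β γ a b hβ hγ ha hb hr
        refine ⟨?_, hneg _ (add_nonneg (smul_nonneg ha.le (hpos' β hβ).2)
          (smul_nonneg hb.le (hpos' γ hγ).2))⟩
        have := isRt_sg cs hr s
        rw [map_add, map_smul, map_smul] at this ⊢
        exact hA.cl _ _ a b hβ.1 hγ.1 ha hb this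
      · intro β γ a b hβ hβ0 hγ hγ0 ha hb hm
        by_contra! hcon
        obtain ⟨hn1, hn2⟩ := hcon
        have key : ∀ (β γ : B → ℝ) (a b : ℝ), IsRt cs γ → 0 ≤ γ → 0 < a → 0 < b →
            a • β + b • γ ∈ A' → γ ∉ A' → β ≠ sr s := by
          rintro _ γ a b hγ hγ0 ha hb hm hn rfl
          have h1 := hm.1
          apply hn
          refine ⟨?_, hneg _ hγ0⟩
          have e : (1 / b) • (sg M s (a • sr s + b • γ)) + (a / b) • sr s = sg M s γ := by
            rw [map_add, map_smul, map_smul, sg_sr_self]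
            match_scalars <;> field_simp <;> ring
          rw [← e]
          refine hA.cl _ _ _ _ h1 hs (by positivity) (by positivity) ?_
          rw [e]; exact isRt_sg cs hγ s
        have hβs := key β γ a b hγ hγ0 ha hb hm hn2
        have hγs := key γ β b a hβ hβ0 hb ha (by rwa [add_comm]) hn1
        have h1 := hm.1
        rw [map_add, map_smul, map_smul] at h1
        rcases hA.cocl _ _ a b (isRt_sg cs hβ s) (sg_pos cs hβ hβ0 s hβs) (isRt_sg cs hγ s)
          (sg_pos cs hγ hγ0 s hγs) ha hb h1 with h | h
        · exact hn1 ⟨h, hneg _ hβ0⟩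
        · exact hn2 ⟨h, hneg _ hγ0⟩
    obtain ⟨z, hz⟩ := ih A' hB hf' hcard
    refine ⟨cs.simple s * z, ?_⟩
    have hzs := sr_not_mem cs (x := z) (s := s) (by rwa [hz])
    ext β
    by_cases hβ : β = sr s
    · subst hβ
      simp only [hs, iff_true]
      refine ⟨isRt_sr cs s, sr_nonneg s, ?_⟩
      rw [rho_simple_mul_inv, sg_sr_self, map_neg]
      exact neg_nonpos.2 hzs
    · constructor
      · rintro ⟨h1, h2, h3⟩
        rw [rho_simple_mul_inv] at h3
        have : sg M s β ∈ Inv cs z := ⟨isRt_sg cs h1 s, sg_pos cs h1 h2 s hβ, h3⟩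
        rw [hz] at this
        have := this.1
        rwa [sg_sg] at this
      · intro h
        obtain ⟨h1, h2⟩ := hA.pos β h
        refine ⟨h1, h2, ?_⟩
        rw [rho_simple_mul_inv]
        have : sg M s β ∈ A' := ⟨by rwa [sg_sg], hneg _ (sg_pos cs h1 h2 s hβ)⟩
        rw [← hz] at this
        exact this.2.2

/-- A weighted partial sum of coordinates. -/
noncomputable def ls (M : CoxeterMatrix B) (s : B) (l : List B) (β : B → ℝ) : ℝ :=
  (l.map fun j => 2 * cc M s j * β j).sum

/-- The skew-symmetric form attached to an ordered list of generators. -/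
noncomputable def om (M : CoxeterMatrix B) : List B → (B → ℝ) → (B → ℝ) → ℝ
  | [], _, _ => 0
  | s :: l, β, γ => β s * ls M s l γ - γ s * ls M s l β + om M l β γ

theorem ls_congr (s : B) (l : List B) (β β' : B → ℝ) (h : ∀ j ∈ l, β j = β' j) :
    ls M s l β = ls M s l β' := by
  unfold ls
  congr 1
  exact List.map_congr_left fun j hj => by rw [h j hj]

theorem om_congr (l : List B) (β β' γ γ' : B → ℝ) (h : ∀ j ∈ l, β j = β' j)
    (h' : ∀ j ∈ l, γ j = γ' j) : om M l β γ = om M l β' γ' := by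
  induction l with
  | nil => rfl
  | cons s l ih =>
    have h1 : ∀ j ∈ l, β j = β' j := fun j hj => h j (List.mem_cons_of_mem _ hj)
    have h2 : ∀ j ∈ l, γ j = γ' j := fun j hj => h' j (List.mem_cons_of_mem _ hj)
    rw [om, om, ih h1 h2, ls_congr s l β β' h1, ls_congr s l γ γ' h2, h s (by simp),
      h' s (by simp)]

theorem ls_zero (s : B) (l : List B) : ls M s l 0 = 0 := by
  unfold ls; simp

theorem om_zero_right (l : List B) (β : B → ℝ) : om M l β 0 = 0 := by
  induction l with
  | nil => rfl
  | cons s l ih => rw [om, ih, ls_zero]; simp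

theorem om_skew (l : List B) (β γ : B → ℝ) : om M l γ β = - om M l β γ := by
  induction l with
  | nil => simp [om]
  | cons s l ih => rw [om, om, ih]; ring

theorem om_append (l : List B) (s : B) (β γ : B → ℝ) :
    om M (l ++ [s]) β γ = om M l β γ + ls M s l β * γ s - ls M s l γ * β s := by
  induction l with
  | nil => simp [om, ls]
  | cons t l ih =>
    rw [List.cons_append, om, om, ih]
    have e1 : ∀ δ, ls M t (l ++ [s]) δ = ls M t l δ + 2 * cc M t s * δ s := by
      intro δ; simp [ls]
    have e2 : ∀ δ, ls M s (t :: l) δ = 2 * cc M t s * δ t + ls M s l δ := by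
      intro δ; simp [ls, cc_symm s t]
    rw [e1, e1, e2, e2]; ring

theorem gf_ls (s : B) (l : List B) (hnd : (s :: l).Nodup) (β : B → ℝ)
    (h : ∀ i, i ∉ s :: l → β i = 0) : gf M s β = 2 * β s - ls M s l β := by
  have h1 : gf M s β = ∑ j ∈ (s :: l).toFinset, (-2 * cc M s j) * β j := by
    rw [gf_apply]
    symm
    apply Finset.sum_subset (Finset.subset_univ _)
    intro i _ hi
    rw [h i (by simpa using hi), mul_zero]
  rw [h1, List.sum_toFinset _ hnd, List.map_cons, List.sum_cons, cc_self]
  have : (l.map fun j => (-2 * cc M s j) * β j).sum = - ls M s l β := by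
    unfold ls
    clear h hnd h1
    induction l with
    | nil => simp
    | cons t l ih => simp only [List.map_cons, List.sum_cons, ih]; ring
  rw [this]; ring

theorem om_rotate (s : B) (l : List B) (hnd : (s :: l).Nodup) (β γ : B → ℝ)
    (hβ : ∀ i, i ∉ s :: l → β i = 0) (hγ : ∀ i, i ∉ s :: l → γ i = 0) :
    om M (l ++ [s]) (sg M s β) (sg M s γ) = om M (s :: l) β γ := by
  have hs : s ∉ l := (List.nodup_cons.1 hnd).1
  have hc : ∀ δ : B → ℝ, ∀ j ∈ l, sg M s δ j = δ j := by
    intro δ j hj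
    exact sg_ne s j (fun h => hs (h ▸ hj)) δ
  rw [om_append, om, om_congr l _ β _ γ (hc β) (hc γ), ls_congr s l _ β (hc β),
    ls_congr s l _ γ (hc γ), sg_same, sg_same, gf_ls s l hnd β hβ, gf_ls s l hnd γ hγ]
  ring

theorem ls_nonneg (s : B) (l : List B) (hs : s ∉ l) (β : B → ℝ) (h : 0 ≤ β) :
    0 ≤ ls M s l β := by
  unfold ls
  apply List.sum_nonneg
  intro x hx
  obtain ⟨j, hj, rfl⟩ := List.mem_map.1 hx
  have := cc_nonneg (M := M) (i := s) (j := j) (fun h => hs (h ▸ hj))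
  have h2 : 0 ≤ β j := h j
  positivity

/-- The word attached to a list of subsets. -/
def wd (l : List B) (K : List (Finset B)) : List B :=
  (K.map (fun k => l.filter (fun b => b ∈ k))).flatten

theorem wd_cons (l : List B) (k : Finset B) (K : List (Finset B)) :
    wd l (k :: K) = l.filter (fun b => b ∈ k) ++ wd l K := by simp [wd]

theorem chain_not_mem (s : B) (k : Finset B) (K : List (Finset B))
    (hc : List.IsChain (fun a b => b ⊆ a) (k :: K)) (hs : s ∉ k) : ∀ k' ∈ k :: K, s ∉ k' := by
  induction K generalizing k with
  | nil => simpa using hs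
  | cons k2 K ih =>
    rw [List.isChain_cons_cons] at hc
    intro k' hk'
    rcases List.mem_cons.1 hk' with rfl | h
    · exact hs
    · exact ih k2 hc.2 (fun h => hs (hc.1 h)) k' h

theorem wd_drop (s : B) (l : List B) (K : List (Finset B)) (h : ∀ k ∈ K, s ∉ k) :
    wd (s :: l) K = wd l K ∧ wd (l ++ [s]) K = wd l K := by
  induction K with
  | nil => simp [wd]
  | cons k K ih =>
    obtain ⟨h1, h2⟩ := ih fun k' hk' => h k' (List.mem_cons_of_mem _ hk')
    have hk : s ∉ k := h k (by simp)
    rw [wd_cons, wd_cons, wd_cons, h1, h2]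
    simp [hk]

theorem wd_shift (s : B) (l : List B) (hs : s ∉ l) (K : List (Finset B)) :
    ∀ k : Finset B, List.IsChain (fun a b => b ⊆ a) (k :: K) → s ∈ k →
    ∃ h K', List.IsChain (fun a b => b ⊆ a) (h :: K') ∧ h ⊆ k ∧
      wd (s :: l) (k :: K) = s :: wd (l ++ [s]) (h :: K') := by
  have he : ∀ k : Finset B, l.filter (fun b => b ∈ k.erase s) = l.filter (fun b => b ∈ k) := by
    intro k
    apply List.filter_congr
    intro b hb
    have : b ≠ s := fun h => hs (h ▸ hb)
    simp [this]
  induction K with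
  | nil =>
    intro k _ hk
    refine ⟨k.erase s, [], by simp, Finset.erase_subset _ _, ?_⟩
    rw [wd_cons, wd_cons, List.filter_append, he]
    simp [hk, wd]
  | cons k2 K ih =>
    intro k hc hk
    have hc' := hc
    rw [List.isChain_cons_cons] at hc'
    by_cases h2 : s ∈ k2
    · obtain ⟨h, K', c1, c2, c3⟩ := ih k2 hc'.2 h2
      refine ⟨k, h :: K', List.isChain_cons_cons.2 ⟨c2.trans hc'.1, c1⟩, subset_rfl, ?_⟩
      rw [wd_cons, c3, wd_cons _ k, List.filter_append]
      simp [hk]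
    · refine ⟨k.erase s, k2 :: K, List.isChain_cons_cons.2 ⟨?_, hc'.2⟩,
        Finset.erase_subset _ _, ?_⟩
      · intro b hb
        exact Finset.mem_erase.2 ⟨fun h => h2 (h ▸ hb), hc'.1 hb⟩
      · obtain ⟨d1, d2⟩ := wd_drop s l (k2 :: K) (chain_not_mem s k2 K hc'.2 h2)
        rw [wd_cons, wd_cons _ (k.erase s), d1, d2, List.filter_append, he]
        simp [hk]

theorem csort_cases (cs : CoxeterSystem M W) (s : B) (l : List B) (hs : s ∉ l) (x : W)
    (h : CSortable cs (s :: l) x) : CSortable cs l x ∨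
      ∃ y, x = cs.simple s * y ∧ cs.length x = cs.length y + 1 ∧ CSortable cs (l ++ [s]) y := by
  obtain ⟨K, hc, hw, hl⟩ := h
  change cs.wordProd (wd (s :: l) K) = x at hw
  change cs.length x = (wd (s :: l) K).length at hl
  rcases K with _ | ⟨k, K⟩
  · left
    exact ⟨[], List.IsChain.nil, by simpa [wd] using hw, by simpa [wd] using hl⟩
  · by_cases hk : s ∈ k
    · right
      obtain ⟨h, K', c1, c2, c3⟩ := wd_shift s l hs K k hc hk
      rw [c3, cs.wordProd_cons] at hw
      rw [c3, List.length_cons] at hl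
      have h1 := cs.length_wordProd_le (wd (l ++ [s]) (h :: K'))
      have h2 := cs.length_mul_le (cs.simple s) (cs.wordProd (wd (l ++ [s]) (h :: K')))
      rw [hw, cs.length_simple] at h2
      refine ⟨cs.wordProd (wd (l ++ [s]) (h :: K')), hw.symm, by omega, h :: K', c1, rfl, ?_⟩
      change _ = (wd (l ++ [s]) (h :: K')).length
      omega
    · left
      obtain ⟨d1, -⟩ := wd_drop s l (k :: K) (chain_not_mem s k K hc hk)
      rw [d1] at hw hl
      exact ⟨k :: K, hc, hw, hl⟩

theorem csort_word (cs : CoxeterSystem M W) (l : List B) (x : W) (h : CSortable cs l x) :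
    ∃ ω : List B, (∀ i ∈ ω, i ∈ l) ∧ cs.wordProd ω = x := by
  obtain ⟨K, -, hw, -⟩ := h
  refine ⟨_, ?_, hw⟩
  intro i hi
  simp only [List.mem_flatten, List.mem_map] at hi
  obtain ⟨_, ⟨k, -, rfl⟩, h2⟩ := hi
  exact (List.mem_filter.1 h2).1

theorem rho_word_coord (cs : CoxeterSystem M W) (ω : List B) (j : B) (hj : j ∉ ω) (β : B → ℝ) :
    rho cs (cs.wordProd ω) β j = β j := by
  induction ω with
  | nil => simp
  | cons i ω ih =>
    rw [cs.wordProd_cons, map_mul, Module.End.mul_apply, rho_simple, sg_ne, ih]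
    · exact fun h => hj (List.mem_cons_of_mem _ h)
    · rintro rfl; simp at hj

theorem inv_supp (cs : CoxeterSystem M W) (l : List B) (x : W) (h : CSortable cs l x)
    (δ : B → ℝ) (hδ : δ ∈ Inv cs x) (j : B) (hj : j ∉ l) : δ j = 0 := by
  obtain ⟨ω, h1, rfl⟩ := csort_word cs l x h
  obtain ⟨-, h2, h3⟩ := hδ
  have := h3 j
  rw [← cs.wordProd_reverse, rho_word_coord cs _ j (by
    rw [List.mem_reverse]; exact fun h => hj (h1 j h))] at this
  exact le_antisymm this (h2 j)

theorem aligned (cs : CoxeterSystem M W) : ∀ (n : ℕ) (l : List B) (x : W),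
    l.length + cs.length x = n → l.Nodup → CSortable cs l x →
    ∀ (β γ : B → ℝ) (a b : ℝ), IsRt cs β → 0 ≤ β → IsRt cs γ → 0 ≤ γ → 0 < a → 0 < b →
    (∀ i, i ∉ l → β i = 0) → (∀ i, i ∉ l → γ i = 0) →
    a • β + b • γ ∈ Inv cs x → 0 ≤ om M l β γ → β ∈ Inv cs x := by
  intro n
  induction n with
  | zero =>
    intro l x hn _ _ β γ a b hβ hβ0 _ _ _ _ hs _ _ _
    exfalso
    have : l = [] := List.length_eq_zero_iff.1 (by omega)
    subst this
    exact rt_ne_zero cs hβ (funext fun i => hs i (by simp))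
  | succ n ih =>
    intro l x hn hnd hx β γ a b hβ hβ0 hγ hγ0 ha hb hsβ hsγ hδ hom
    rcases l with _ | ⟨s, l⟩
    · exact (rt_ne_zero cs hβ (funext fun i => hsβ i (by simp))).elim
    have hs : s ∉ l := (List.nodup_cons.1 hnd).1
    have hndl : l.Nodup := (List.nodup_cons.1 hnd).2
    simp only [List.length_cons] at hn
    rcases csort_cases cs s l hs x hx with h | ⟨y, rfl, hlen, hy⟩
    · have hz : ∀ i, i ∉ l → β i = 0 ∧ γ i = 0 := by
        intro i hi
        have h1 := inv_supp cs l x h _ hδ i hi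
        simp at h1
        have h2 : 0 ≤ β i := hβ0 i
        have h3 : 0 ≤ γ i := hγ0 i
        constructor <;> nlinarith [mul_nonneg ha.le h2, mul_nonneg hb.le h3]
      refine ih l x (by omega) hndl h β γ a b hβ hβ0 hγ hγ0 ha hb (fun i hi => (hz i hi).1)
        (fun i hi => (hz i hi).2) hδ ?_
      rw [om, (hz s hs).1, (hz s hs).2] at hom
      linarith
    · obtain ⟨hδr, hδ0, hδn⟩ := hδ
      rw [rho_simple_mul_inv] at hδn
      have hys : 0 ≤ rho cs y⁻¹ (sr s) := by
        rcases rt_pos_or_neg cs (isRt_rho cs (isRt_sr cs s) y⁻¹) with h1 | h1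
        · exact h1
        · exfalso
          have := length_lt_of_neg cs _ y rfl 1 s (by simpa using sr_nonneg s) (by simpa using h1)
          simp only [one_mul, inv_one, mul_one] at this
          omega
      by_cases hβs : β = sr s
      · subst hβs
        refine ⟨hβ, hβ0, ?_⟩
        rw [rho_simple_mul_inv, sg_sr_self, map_neg]
        exact neg_nonpos.2 hys
      have hδs : a • β + b • γ ≠ sr s := fun h =>
        hβs (pos_comb cs hβ hβ0 hγ hγ0 ha hb s h).1
      have hγs : γ ≠ sr s := by
        rintro rfl
        have h1 : ls M s l β = 0 := by
          apply le_antisymm _ (ls_nonneg s l hs β hβ0)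
          have hz : ∀ j ∈ l, (sr s : B → ℝ) j = (0 : B → ℝ) j := by
            intro j hj
            have : j ≠ s := fun h => hs (h ▸ hj)
            simp [sr, this]
          rw [om, ls_congr s l _ 0 hz, om_congr l β β _ 0 (fun _ _ => rfl) hz, ls_zero,
            om_zero_right] at hom
          simp [sr] at hom
          exact hom
        have h2 := sg_pos cs hβ hβ0 s hβs s
        have h3 := sg_pos cs hδr hδ0 s hδs s
        rw [sg_same, gf_ls s l hnd β hsβ, h1] at h2
        rw [map_add, map_smul, map_smul, sg_sr_self] at h3
        simp only [Pi.add_apply, Pi.smul_apply, Pi.neg_apply, Pi.zero_apply, smul_eq_mul, sg_same,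
          gf_ls s l hnd β hsβ, h1] at h3 h2
        have h4 : 0 ≤ β s := hβ0 s
        have h5 : β s = 0 := by linarith
        rw [h5] at h3
        simp [sr] at h3
        linarith
      have hsupp : ∀ δ : B → ℝ, (∀ i, i ∉ s :: l → δ i = 0) →
          ∀ i, i ∉ l ++ [s] → sg M s δ i = 0 := by
        intro δ hδ i hi
        simp only [List.mem_append, List.mem_singleton, not_or] at hi
        rw [sg_ne s i hi.2]
        exact hδ i (by simp [hi.1, hi.2])
      have := ih (l ++ [s]) y (by simp; omega)
        ((List.perm_append_singleton s l).symm.nodup hnd) hy (sg M s β) (sg M s γ) a b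
        (isRt_sg cs hβ s) (sg_pos cs hβ hβ0 s hβs) (isRt_sg cs hγ s) (sg_pos cs hγ hγ0 s hγs)
        ha hb (hsupp β hsβ) (hsupp γ hsγ) ?_ ?_
      · refine ⟨hβ, hβ0, ?_⟩
        rw [rho_simple_mul_inv]
        exact this.2.2
      · rw [← map_smul, ← map_smul, ← map_add]
        exact ⟨isRt_sg cs hδr s, sg_pos cs hδr hδ0 s hδs, hδn⟩
      · rw [om_rotate s l hnd β γ hsβ hsγ]; exact hom

theorem exists_meet [Finite W] (cs : CoxeterSystem M W) (l : List B) (hnd : l.Nodup)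
    (hall : ∀ b : B, b ∈ l) (x x' : W) (hx : CSortable cs l x) (hx' : CSortable cs l x') :
    ∃ z, Inv cs z = Inv cs x ∩ Inv cs x' := by
  have hcl : ∀ (x : W) (β γ : B → ℝ) (a b : ℝ), β ∈ Inv cs x → γ ∈ Inv cs x → 0 < a → 0 < b →
      IsRt cs (a • β + b • γ) → a • β + b • γ ∈ Inv cs x := by
    rintro x β γ a b ⟨-, h1, h2⟩ ⟨-, h3, h4⟩ ha hb hr
    refine ⟨hr, add_nonneg (smul_nonneg ha.le h1) (smul_nonneg hb.le h3), ?_⟩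
    rw [map_add, map_smul, map_smul]
    exact add_nonpos (smul_nonpos_of_nonneg_of_nonpos ha.le h2)
      (smul_nonpos_of_nonneg_of_nonpos hb.le h4)
  have hfin : (Inv cs x ∩ Inv cs x').Finite := by
    have : {β | IsRt cs β}.Finite := by
      apply (Set.finite_range (fun p : W × B => rho cs p.1 (sr p.2))).subset
      rintro β ⟨w, s, rfl⟩
      exact ⟨(w, s), rfl⟩
    exact this.subset fun β h => h.1.1
  have al : ∀ x, CSortable cs l x → _ := fun x hx => aligned cs _ l x rfl hnd hx
  refine bicl_inv cs _ _ ⟨fun β h => ⟨h.1.1, h.1.2.1⟩, ?_, ?_⟩ hfin rfl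
  · intro β γ a b h1 h2 ha hb hr
    exact ⟨hcl x β γ a b h1.1 h2.1 ha hb hr, hcl x' β γ a b h1.2 h2.2 ha hb hr⟩
  · intro β γ a b h1 h2 h3 h4 ha hb hm
    have hv : ∀ δ : B → ℝ, ∀ i, i ∉ l → δ i = 0 := fun _ i hi => (hi (hall i)).elim
    rcases le_total 0 (om M l β γ) with h | h
    · left
      exact ⟨al x hx β γ a b h1 h2 h3 h4 ha hb (hv β) (hv γ) hm.1 h,
        al x' hx' β γ a b h1 h2 h3 h4 ha hb (hv β) (hv γ) hm.2 h⟩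
    · right
      rw [add_comm] at hm
      have h' : 0 ≤ om M l γ β := by rw [om_skew]; linarith
      exact ⟨al x hx γ β b a h3 h4 h1 h2 hb ha (hv γ) (hv β) hm.1 h',
        al x' hx' γ β b a h3 h4 h1 h2 hb ha (hv γ) (hv β) hm.2 h'⟩

end geom

end Sortable

/-- If `x, x'` are `c`-sortable, then the left inversion set of their meet in the
right weak order is the intersection of their left inversion sets. -/
theorem stmt14 {B W : Type*} [DecidableEq B] [Group W] [Finite W] {M : CoxeterMatrix B}
    (cs : CoxeterSystem M W)
    (l : List B) (hnd : l.Nodup) (hall : ∀ b : B, b ∈ l)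
    (x x' : W) (hx : CSortable cs l x) (hx' : CSortable cs l x')
    (m : W) (hm₁ : RightWeakLE cs m x) (hm₂ : RightWeakLE cs m x')
    (hm₃ : ∀ z : W, RightWeakLE cs z x → RightWeakLE cs z x' → RightWeakLE cs z m) :
    leftInvSet cs m = leftInvSet cs x ∩ leftInvSet cs x' := by
  have : Fintype B := ⟨l.toFinset, fun b => List.mem_toFinset.2 (hall b)⟩
  obtain ⟨z, hz⟩ := Sortable.exists_meet cs l hnd hall x x' hx hx'
  have h := Sortable.leftInv_of_Inv cs hz
  apply Set.Subset.antisymm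
  · exact fun t ht => ⟨hm₁ ht, hm₂ ht⟩
  · rw [← h]
    apply hm₃ z
    · unfold RightWeakLE; rw [h]; exact Set.inter_subset_left
    · unfold RightWeakLE; rw [h]; exact Set.inter_subset_right
end

section
/- Let $W$ be a finite Coxeter group acting on $V$, let $c$ be a standard Coxeter element, and let $\mathfrak{y}$ lie in the open base chamber $\mathbb{B}$. Suppose $u = u_0 \lessdot_B u_1 \lessdot_B \cdots \lessdot_B u_r = uc$ is a saturated Bruhat chain with $u \in W_c^+$. Then the points $u_0\mathfrak{y}, u_1\mathfrak{y}, \ldots, u_r\mathfrak{y} \in V$ are affinely independent, so their convex hull is an $r$-dimensional simplex. -/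
open RealInnerProductSpace Module

/-- The Bruhat cover relation. -/
def BruhatCover {B W : Type*} [Group W] {M : CoxeterMatrix B} (cs : CoxeterSystem M W)
    (u v : W) : Prop :=
  (∃ t : W, cs.IsReflection t ∧ v = u * t) ∧ cs.length v = cs.length u + 1

/-- `c` is a standard Coxeter element. -/
def IsStandardCoxeterElement {B W : Type*} [Group W] {M : CoxeterMatrix B}
    (cs : CoxeterSystem M W) (c : W) : Prop :=
  ∃ l : List B, l.Nodup ∧ (∀ b : B, b ∈ l) ∧ c = cs.wordProd l

/-- Reflection length. -/
noncomputable def reflLength {B W : Type*} [Group W] {M : CoxeterMatrix B}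
    (cs : CoxeterSystem M W) (w : W) : ℕ :=
  sInf {n | ∃ l : List W, (∀ t ∈ l, cs.IsReflection t) ∧ l.length = n ∧ l.prod = w}

/-- A finite group generated by reflections, with unit normals `γ`. -/
structure ReflSetup {W V : Type*} [Group W] [NormedAddCommGroup V] [InnerProductSpace ℝ V]
    (T : Set W) (ρ : W →* (V ≃ₗ[ℝ] V)) (γ : W → V) : Prop where
  conj : ∀ w t, t ∈ T → w * t * w⁻¹ ∈ T
  sq : ∀ t ∈ T, t * t = 1
  gen : Subgroup.closure T = ⊤
  inj : Function.Injective ρ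
  unit : ∀ t ∈ T, ⟪γ t, γ t⟫ = (1 : ℝ)
  act : ∀ t ∈ T, ∀ z, ρ t z = z - (2 * ⟪γ t, z⟫) • γ t

namespace ReflSetup

section
variable {W V : Type*} [Group W] [NormedAddCommGroup V] [InnerProductSpace ℝ V]
    {T : Set W} {ρ : W →* (V ≃ₗ[ℝ] V)} {γ : W → V}

lemma mul_app (w w' : W) (x : V) : ρ (w * w') x = ρ w (ρ w' x) := by
  rw [map_mul]; rfl

lemma inv_of (h : ReflSetup T ρ γ) {t : W} (ht : t ∈ T) : t⁻¹ = t :=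
  inv_eq_of_mul_eq_one_left (h.sq t ht)

lemma isom_refl (h : ReflSetup T ρ γ) {t : W} (ht : t ∈ T) (x y : V) :
    ⟪ρ t x, ρ t y⟫ = ⟪x, y⟫ := by
  have h1 := h.unit t ht
  have h2 := real_inner_comm (γ t) x
  rw [h.act t ht, h.act t ht]
  simp only [inner_sub_left, inner_sub_right, inner_smul_left, inner_smul_right, h1]
  simp only [conj_trivial, h2]
  ring

lemma isom (h : ReflSetup T ρ γ) (w : W) : ∀ x y : V, ⟪ρ w x, ρ w y⟫ = ⟪x, y⟫ := by
  have hw : w ∈ Subgroup.closure T := by rw [h.gen]; trivial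
  induction hw using Subgroup.closure_induction with
  | mem t ht => exact h.isom_refl ht
  | one => intro x y; simp
  | mul a b _ _ ha hb => intro x y; rw [mul_app, mul_app, ha, hb]
  | inv a _ ha =>
    intro x y
    rw [← ha, ← mul_app, ← mul_app]; simp

lemma self_adj (h : ReflSetup T ρ γ) {t : W} (ht : t ∈ T) (x y : V) :
    ⟪ρ t x, y⟫ = ⟪x, ρ t y⟫ := by
  have : ρ t (ρ t y) = y := by rw [← mul_app, h.sq t ht]; simp
  conv_lhs => rw [← this]
  exact h.isom t _ _

lemma normal_conj (h : ReflSetup T ρ γ) (w : W) {t : W} (ht : t ∈ T) :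
    ρ w (γ t) = γ (w * t * w⁻¹) ∨ ρ w (γ t) = -γ (w * t * w⁻¹) := by
  have hc := h.conj w t ht
  have h1 : ρ (w * t * w⁻¹) (ρ w (γ t)) = - ρ w (γ t) := by
    rw [← mul_app]
    simp only [inv_mul_cancel_right]
    rw [mul_app, h.act t ht, h.unit t ht, ← map_neg]
    congr 1
    module
  rw [h.act _ hc] at h1
  set k : ℝ := ⟪γ (w * t * w⁻¹), ρ w (γ t)⟫ with hk
  have h2 : ρ w (γ t) = k • γ (w * t * w⁻¹) := by
    have : (2 : ℝ) • ρ w (γ t) = (2 : ℝ) • (k • γ (w * t * w⁻¹)) := by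
      rw [smul_smul]
      have h1b := sub_eq_iff_eq_add.mp h1
      rw [two_smul]
      nth_rewrite 1 [h1b]
      abel
    exact smul_right_injective V (two_ne_zero (α := ℝ)) this
  have h3 : k * k = 1 := by
    have := h.isom w (γ t) (γ t)
    rw [h.unit t ht, h2, inner_smul_left, inner_smul_right, h.unit _ hc] at this
    simpa using this
  rcases mul_self_eq_one_iff.mp h3 with h4 | h4
  · left; rw [h2, h4, one_smul]
  · right; rw [h2, h4, neg_one_smul]

lemma normal_inj (h : ReflSetup T ρ γ) {s t : W} (hs : s ∈ T) (ht : t ∈ T)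
    (e : γ s = γ t) : s = t := by
  apply h.inj
  ext z
  rw [h.act s hs, h.act t ht, e]

/-- Wall reflections of the chamber of `p`. -/
def walls (T : Set W) (ρ : W →* (V ≃ₗ[ℝ] V)) (γ : W → V) (p : V) : Set W :=
  {s | s ∈ T ∧ ∀ t ∈ T, t ≠ s → 0 < ⟪γ t, ρ s p⟫}

lemma descend (h : ReflSetup T ρ γ) {p : V} (hp : ∀ t ∈ T, 0 < ⟪γ t, p⟫) {t : W} (ht : t ∈ T)
    (hn : t ∉ walls T ρ γ p) :
    ∃ s ∈ T, ⟪γ s, p⟫ < ⟪γ t, p⟫ ∧ 0 < ⟪γ t, γ s⟫ ∧ ⟪γ t, γ s⟫ < (1 : ℝ) := by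
  have : ∃ s ∈ T, s ≠ t ∧ ⟪γ s, ρ t p⟫ ≤ 0 := by
    by_contra! hcon
    exact hn ⟨ht, fun s hs hne => hcon s hs hne⟩
  obtain ⟨s, hs, hne, hle⟩ := this
  have hle' := hle
  rw [h.act t ht, inner_sub_right, inner_smul_right, real_inner_comm] at hle
  rw [real_inner_comm (γ t) (γ s)] at hle
  rw [real_inner_comm (γ s) p] at hle
  have hps := hp s hs
  have hpt := hp t ht
  have ha0 : 0 < ⟪γ t, γ s⟫ := by
    by_contra! hcon
    nlinarith
  have ha1 : ⟪γ t, γ s⟫ < (1 : ℝ) := by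
    refine (inner_lt_one_iff_real_of_norm_eq_one ?_ ?_).mpr ?_
    · have := h.unit t ht
      rw [real_inner_self_eq_norm_sq] at this
      nlinarith [norm_nonneg (γ t)]
    · have := h.unit s hs
      rw [real_inner_self_eq_norm_sq] at this
      nlinarith [norm_nonneg (γ s)]
    · intro e; exact hne (h.normal_inj ht hs e).symm
  by_cases hlt : ⟪γ s, p⟫ < ⟪γ t, p⟫
  · exact ⟨s, hs, hlt, ha0, ha1⟩
  · have hs' := h.conj t s hs
    have hsgn : ρ t (γ s) = -γ (t * s * t⁻¹) := by
      rcases h.normal_conj t hs with e | e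
      · exfalso
        have := hp _ hs'
        rw [← e, h.self_adj ht] at this
        linarith
      · exact e
    have hg : γ (t * s * t⁻¹) = (2 * ⟪γ t, γ s⟫) • γ t - γ s := by
      rw [← neg_eq_iff_eq_neg.mpr hsgn, h.act t ht]; module
    refine ⟨_, hs', ?_⟩
    rw [hg]
    simp only [inner_sub_left, inner_sub_right, inner_smul_left, inner_smul_right, h.unit t ht,
      conj_trivial]
    refine ⟨?_, by linarith, by linarith⟩
    nlinarith

lemma walls_gen [Finite W] (h : ReflSetup T ρ γ) {p : V} (hp : ∀ t ∈ T, 0 < ⟪γ t, p⟫) :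
    ∀ t ∈ T, t ∈ Subgroup.closure (walls T ρ γ p) := by
  have wf : WellFounded (fun a b : W => ⟪γ a, p⟫ < ⟪γ b, p⟫) := by
    have : IsTrans W (fun a b : W => ⟪γ a, p⟫ < ⟪γ b, p⟫) := ⟨fun _ _ _ => lt_trans⟩
    have : Std.Irrefl (fun a b : W => ⟪γ a, p⟫ < ⟪γ b, p⟫) := ⟨fun _ => lt_irrefl _⟩
    exact Finite.wellFounded_of_trans_of_irrefl _
  intro t
  induction t using wf.induction with
  | _ t ih =>
  intro ht
  by_cases hn : t ∈ walls T ρ γ p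
  · exact Subgroup.subset_closure hn
  · obtain ⟨s, hs, hlt, h0, h1⟩ := h.descend hp ht hn
    have hs1 := ih s hlt hs
    have hd := h.conj s t ht
    have hps := hp s hs
    have hpt := hp t ht
    have hact : ⟪ρ s (γ t), p⟫ = ⟪γ t, p⟫ - 2 * ⟪γ t, γ s⟫ * ⟪γ s, p⟫ := by
      rw [h.act s hs, inner_sub_left, inner_smul_left, real_inner_comm (γ t) (γ s)]
      simp
    have hd1 : ⟪γ (s * t * s⁻¹), p⟫ < ⟪γ t, p⟫ := by
      rcases h.normal_conj s ht with e | e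
      · rw [← e, hact]; nlinarith
      · rw [← neg_eq_iff_eq_neg.mpr e, inner_neg_left, hact]; nlinarith
    have hd2 := ih _ hd1 hd
    have : t = s⁻¹ * (s * t * s⁻¹) * s := by group
    rw [this]
    exact mul_mem (mul_mem (inv_mem hs1) hd2) hs1

lemma exchange (h : ReflSetup T ρ γ) {p : V} (hp : ∀ t ∈ T, 0 < ⟪γ t, p⟫) (l : List W) :
    (∀ s ∈ l, s ∈ walls T ρ γ p) → ∀ t ∈ T, ⟪γ t, ρ l.prod p⟫ < 0 →
    ∃ l' : List W, (∀ s ∈ l', s ∈ walls T ρ γ p) ∧ l'.length + 1 = l.length ∧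
      t * l.prod = l'.prod := by
  induction l with
  | nil =>
    intro _ t ht hlt
    have := hp t ht
    simp at hlt
    linarith
  | cons s l ih =>
    intro hl t ht hlt
    have hs := hl s (by simp)
    have hl' : ∀ x ∈ l, x ∈ walls T ρ γ p := fun x hx => hl x (by simp [hx])
    by_cases hts : t = s
    · refine ⟨l, hl', by simp, ?_⟩
      rw [List.prod_cons, ← mul_assoc, hts, h.sq s hs.1, one_mul]
    · have hpos := hs.2 t ht hts
      have hc := h.conj s t ht
      have e : ρ s (γ t) = γ (s * t * s⁻¹) := by
        rcases h.normal_conj s ht with e | e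
        · exact e
        · exfalso
          rw [← h.self_adj hs.1, e, inner_neg_left] at hpos
          have := hp _ hc
          linarith
      rw [List.prod_cons, mul_app, ← h.self_adj hs.1, e] at hlt
      obtain ⟨l', h1, h2, h3⟩ := ih hl' _ hc hlt
      refine ⟨s :: l', ?_, by simp [h2], ?_⟩
      · intro x hx
        rcases List.mem_cons.mp hx with rfl | hx
        · exact hs
        · exact h1 x hx
      · rw [List.prod_cons, List.prod_cons, ← h3]
        have hss := h.sq s hs.1
        rw [h.inv_of hs.1]
        simp only [← mul_assoc, hss, one_mul]

lemma free_list (h : ReflSetup T ρ γ) {p : V} (hp : ∀ t ∈ T, 0 < ⟪γ t, p⟫) (n : ℕ) :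
    ∀ l : List W, l.length ≤ n → (∀ s ∈ l, s ∈ walls T ρ γ p) → ρ l.prod p = p → l.prod = 1 := by
  induction n with
  | zero =>
    intro l hl _ _
    have : l = [] := List.eq_nil_of_length_eq_zero (by omega)
    simp [this]
  | succ n ih =>
    intro l hl hw hfix
    cases l with
    | nil => simp
    | cons s l =>
      have hs := hw s (by simp)
      have hl' : ∀ x ∈ l, x ∈ walls T ρ γ p := fun x hx => hw x (by simp [hx])
      have hneg : ⟪γ s, ρ l.prod p⟫ < 0 := by
        have : ρ s p = ρ l.prod p := by
          conv_lhs => rw [← hfix]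
          rw [← mul_app, List.prod_cons, ← mul_assoc, h.sq s hs.1, one_mul]
        rw [← this, h.act s hs.1, inner_sub_right, inner_smul_right, h.unit s hs.1]
        have := hp s hs.1
        linarith
      obtain ⟨l', h1, h2, h3⟩ := h.exchange hp l hl' s hs.1 hneg
      rw [List.prod_cons] at hfix ⊢
      rw [h3] at hfix ⊢
      simp only [List.length_cons] at hl
      exact ih l' (by omega) h1 hfix

lemma free [Finite W] (h : ReflSetup T ρ γ) {p : V} (hp : ∀ t ∈ T, 0 < ⟪γ t, p⟫) (w : W)
    (hw : ρ w p = p) : w = 1 := by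
  have hcl : w ∈ Subgroup.closure (walls T ρ γ p) := by
    have : Subgroup.closure T ≤ Subgroup.closure (walls T ρ γ p) :=
      (Subgroup.closure_le _).mpr (h.walls_gen hp)
    apply this
    rw [h.gen]; trivial
  rw [← Subgroup.mem_toSubmonoid, Subgroup.closure_toSubmonoid] at hcl
  obtain ⟨l, hl, rfl⟩ := Submonoid.exists_list_of_mem_closure hcl
  refine h.free_list hp _ l le_rfl ?_ hw
  intro s hs
  rcases hl s hs with h1 | h1
  · exact h1
  · have h2 : s⁻¹ ∈ walls T ρ γ p := h1
    have := h.inv_of h2.1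
    rw [inv_inv] at this
    rw [this]; exact h2

/-- Freeness on regular points. -/
lemma free' [Finite W] (h : ReflSetup T ρ γ) {p : V} (hp : ∀ t ∈ T, ⟪γ t, p⟫ ≠ 0) (w : W)
    (hw : ρ w p = p) : w = 1 := by
  classical
  have h' : ReflSetup T ρ (fun t => if 0 < ⟪γ t, p⟫ then γ t else -γ t) := by
    refine ⟨h.conj, h.sq, h.gen, h.inj, ?_, ?_⟩
    · intro t ht
      have := h.unit t ht
      split_ifs <;> simp only [inner_neg_left, inner_neg_right, neg_neg, this]
    · intro t ht z
      rw [h.act t ht]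
      split_ifs <;> simp
  refine h'.free (p := p) ?_ w hw
  intro t ht
  have := hp t ht
  split_ifs with h1
  · exact h1
  · rw [inner_neg_left]
    have := lt_of_le_of_ne (not_lt.mp h1) this
    linarith

/-- The fixed space. -/
def fix (ρ : W →* (V ≃ₗ[ℝ] V)) (w : W) : Submodule ℝ V :=
  LinearMap.ker ((ρ w : V →ₗ[ℝ] V) - LinearMap.id)

lemma mem_fix (w : W) (x : V) : x ∈ fix ρ w ↔ ρ w x = x := by
  simp [fix, sub_eq_zero]

lemma exists_refl [Finite W] (h : ReflSetup T ρ γ) (w : W) (hw : w ≠ 1) :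
    ∃ t ∈ T, ∀ x ∈ fix ρ w, ⟪γ t, x⟫ = 0 := by
  by_contra! hcon
  have hf : Finite T := inferInstance
  obtain ⟨p, hpm, hp⟩ := Module.Dual.exists_forall_mem_ne_zero_of_forall_exists
    (p := fix ρ w) (f := fun t : T => (innerₛₗ ℝ (γ t) : V →ₗ[ℝ] ℝ)) (by
      rintro ⟨t, ht⟩
      obtain ⟨x, hx, hne⟩ := hcon t ht
      exact ⟨x, hx, by simpa using hne⟩)
  exact hw (h.free' (p := p) (fun t ht => by simpa using hp ⟨t, ht⟩) w ((mem_fix w p).mp hpm))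

lemma range_eq [FiniteDimensional ℝ V] (h : ReflSetup T ρ γ) (w : W) :
    LinearMap.range ((ρ w : V →ₗ[ℝ] V) - LinearMap.id) = (fix ρ w)ᗮ := by
  apply Submodule.eq_of_le_of_finrank_eq
  · rintro _ ⟨v, rfl⟩
    rw [Submodule.mem_orthogonal]
    intro u hu
    have hu' := (mem_fix w u).mp hu
    have := h.isom w u v
    rw [hu'] at this
    simp [inner_sub_right, this]
  · have h1 := LinearMap.finrank_range_add_finrank_ker ((ρ w : V →ₗ[ℝ] V) - LinearMap.id)
    have h2 := Submodule.finrank_add_finrank_orthogonal (fix ρ w)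
    unfold fix at *
    omega

lemma carter [Finite W] [FiniteDimensional ℝ V] (h : ReflSetup T ρ γ) (n : ℕ) :
    ∀ w : W, finrank ℝ V ≤ finrank ℝ (fix ρ w) + n →
    ∃ l : List W, (∀ t ∈ l, t ∈ T) ∧ l.length ≤ n ∧ l.prod = w := by
  induction n with
  | zero =>
    intro w hw
    refine ⟨[], by simp, by simp, ?_⟩
    have : fix ρ w = ⊤ := Submodule.eq_top_of_finrank_eq
      (le_antisymm (Submodule.finrank_le _) (by simpa using hw))
    apply h.inj
    ext z
    have hz : z ∈ fix ρ w := by rw [this]; trivial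
    simpa using ((mem_fix w z).mp hz).symm
  | succ n ih =>
    intro w hw
    by_cases h1 : w = 1
    · exact ⟨[], by simp, by simp, by simp [h1]⟩
    obtain ⟨t, ht, hperp⟩ := h.exists_refl w h1
    have hmem : γ t ∈ LinearMap.range ((ρ w : V →ₗ[ℝ] V) - LinearMap.id) := by
      rw [h.range_eq, Submodule.mem_orthogonal]
      intro u hu
      rw [real_inner_comm]; exact hperp u hu
    obtain ⟨v, hv⟩ := hmem
    have hv' : ρ w v = v + γ t := by
      rw [← hv]; simp
    have hu := h.unit t ht
    have hin : 2 * ⟪γ t, v⟫ + 1 = (0 : ℝ) := by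
      have := h.isom w v v
      rw [hv'] at this
      simp only [inner_add_left, inner_add_right, hu] at this
      have h3 := real_inner_comm v (γ t)
      linarith
    have hfixv : v ∈ fix ρ (t * w) := by
      rw [mem_fix, mul_app, hv', h.act t ht, inner_add_right, hu]
      have : (2 * (⟪γ t, v⟫ + 1) : ℝ) = 1 := by linarith
      rw [this]; simp
    have hnv : v ∉ fix ρ w := by
      rw [mem_fix, hv']
      intro e
      have : γ t = 0 := by simpa using e
      rw [this] at hu
      simp at hu
    have hle : fix ρ w ≤ fix ρ (t * w) := by
      intro x hx
      have := hperp x hx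
      rw [mem_fix] at hx ⊢
      rw [mul_app, hx, h.act t ht, this]; simp
    have hlt : fix ρ w < fix ρ (t * w) :=
      lt_of_le_of_ne hle (fun e => hnv (e ▸ hfixv))
    have := Submodule.finrank_lt_finrank_of_lt hlt
    obtain ⟨l, hl1, hl2, hl3⟩ := ih (t * w) (by omega)
    refine ⟨t :: l, ?_, by simpa using hl2, ?_⟩
    · intro x hx
      rcases List.mem_cons.mp hx with rfl | hx
      · exact ht
      · exact hl1 x hx
    · rw [List.prod_cons, hl3, ← mul_assoc, h.sq t ht, one_mul]

end

end ReflSetup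

/-- If `u = u₀ ⋖_B u₁ ⋖_B ⋯ ⋖_B u_r = u₀ c` is a saturated Bruhat chain with
`u₀ ∈ W_c⁺`, and `𝔶` lies in the open base chamber, then the orbit points
`u₀𝔶, …, u_r𝔶` are affinely independent. -/
theorem stmt18 {B W : Type*} [Group W] [Finite W] [Fintype B] {M : CoxeterMatrix B}
    (cs : CoxeterSystem M W) {r : ℕ} (hr : Fintype.card B = r)
    {V : Type*} [NormedAddCommGroup V] [InnerProductSpace ℝ V]
    [FiniteDimensional ℝ V] (hV : finrank ℝ V = r)
    -- the reflection representation: each reflection acts as the orthogonal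
    -- reflection in its (positive) root:
    (ρ : W →* (V ≃ₗ[ℝ] V)) (hρ : Function.Injective ρ)
    (β : W → V)
    (hβ : ∀ t : W, cs.IsReflection t → β t ≠ 0 ∧
      ∀ z : V, ρ t z = z - (2 * ⟪β t, z⟫ / ⟪β t, β t⟫) • β t)
    -- `𝔶` lies in the open base chamber:
    (𝔶 : V) (h𝔶 : ∀ t : W, cs.IsReflection t → 0 < ⟪β t, 𝔶⟫)
    (c : W) (hc : IsStandardCoxeterElement cs c) (hcT : reflLength cs c = r)
    (u : Fin (r + 1) → W)
    (hcov : ∀ i : Fin r, BruhatCover cs (u i.castSucc) (u i.succ))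
    (hend : u (Fin.last r) = u 0 * c)
    (hWc : cs.length (u 0 * c) = cs.length (u 0) + r) :
    AffineIndependent ℝ (fun i : Fin (r + 1) => ρ (u i) 𝔶) := by
  have hS : ReflSetup {t : W | cs.IsReflection t} ρ (fun t => (‖β t‖⁻¹) • β t) := by
    refine ⟨fun w t ht => ht.conj w, fun t ht => ht.mul_self, ?_, hρ, ?_, ?_⟩
    · rw [eq_top_iff, ← cs.subgroup_closure_range_simple]
      apply Subgroup.closure_mono
      rintro _ ⟨i, rfl⟩
      exact cs.isReflection_simple i
    · intro t ht
      have h0 := norm_ne_zero_iff.mpr (hβ t ht).1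
      simp only [inner_smul_left, inner_smul_right, conj_trivial]
      rw [real_inner_self_eq_norm_sq]
      field_simp
    · intro t ht z
      have h0 := norm_ne_zero_iff.mpr (hβ t ht).1
      rw [(hβ t ht).2, real_inner_self_eq_norm_sq]
      simp only [inner_smul_left, conj_trivial, smul_smul]
      congr 2
      field_simp
  -- `c` has no nonzero fixed vector
  have hfix : ReflSetup.fix ρ c = ⊥ := by
    by_contra hne
    have hpos : 0 < finrank ℝ (ReflSetup.fix ρ c) := by
      rw [Nat.pos_iff_ne_zero]
      intro e
      exact hne (Submodule.finrank_eq_zero.mp e)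
    have hle := Submodule.finrank_le (ReflSetup.fix ρ c)
    obtain ⟨l, hl1, hl2, hl3⟩ := hS.carter (r - 1) c (by omega)
    have : reflLength cs c ≤ l.length := Nat.sInf_le ⟨l, hl1, rfl, hl3⟩
    omega
  have hsurj : Function.Surjective ((ρ c : V →ₗ[ℝ] V) - LinearMap.id : V →ₗ[ℝ] V) :=
    LinearMap.injective_iff_surjective.mp (LinearMap.ker_eq_bot.mp hfix)
  rw [affineIndependent_iff_finrank_vectorSpan_eq ℝ _ (n := r) (by simp)]
  set S := vectorSpan ℝ (Set.range fun i : Fin (r + 1) => ρ (u i) 𝔶) with hSdef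
  have hdiff : ∀ (i : Fin r) (v : V), ρ (u i.succ) v - ρ (u i.castSucc) v ∈ S := by
    intro i v
    obtain ⟨⟨t, ht, e⟩, _⟩ := hcov i
    have h1 : ρ (u i.succ) 𝔶 - ρ (u i.castSucc) 𝔶 ∈ S :=
      vsub_mem_vectorSpan ℝ (Set.mem_range_self i.succ) (Set.mem_range_self i.castSucc)
    have key : ∀ z : V, ρ (u i.succ) z - ρ (u i.castSucc) z
        = (-(2 * ⟪β t, z⟫ / ⟪β t, β t⟫)) • ρ (u i.castSucc) (β t) := by
      intro z
      rw [e, ReflSetup.mul_app, (hβ t ht).2, map_sub, map_smul]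
      module
    have hbb : ⟪β t, β t⟫ ≠ (0 : ℝ) := inner_self_ne_zero.mpr (hβ t ht).1
    have hby := (h𝔶 t ht).ne'
    rw [key] at h1 ⊢
    apply Submodule.smul_mem
    refine (Submodule.smul_mem_iff _ ?_).mp h1
    exact neg_ne_zero.mpr (div_ne_zero (mul_ne_zero two_ne_zero hby) hbb)
  have hall : ∀ (v : V) (i : Fin (r + 1)), ρ (u i) v - ρ (u 0) v ∈ S := by
    intro v i
    induction i using Fin.induction with
    | zero => simp
    | succ i ih =>
      have := S.add_mem (hdiff i v) ih
      simpa using this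
  have htop : S = ⊤ := by
    rw [eq_top_iff]
    intro x _
    obtain ⟨v, hv⟩ := hsurj ((ρ (u 0)).symm x)
    have h1 := hall v (Fin.last r)
    rw [hend, ReflSetup.mul_app, ← map_sub] at h1
    have h2 : ρ c v - v = (ρ (u 0)).symm x := by simpa using hv
    rw [h2] at h1
    simpa using h1
  rw [htop, finrank_top, hV]
end
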